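/- Let η > 0, δ, α ∈ ℝ, λ ≠ 0, and let K(u,v,w) = (2δ + αη)u + λu² be the first-order (ε = 0) reduced normal form. Then a point p = (u,v,w) ∈ P^η with 0 < u < η is an equilibrium of the reduced vector field X_K = ∇K × ∇S^η if and only if u = u₀ := −(2δ + αη)/(2λ). In particular, if u₀ ∈ (0,η) the set {p ∈ P^η : u = u₀} is a circle consisting entirely of equilibria, and if u₀ ∉ (0,η) there are no equilibria with 0 < u < η. -/

import Mathlib

/-- The defining function `S^η(u,v,w) = (η−u)²u⁴/2 − 2(v² + w²)` of the
twice-reduced phase space. -/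
noncomputable def Sred (η : ℝ) (p : ℝ × ℝ × ℝ) : ℝ :=
  (η - p.1) ^ 2 * p.1 ^ 4 / 2 - 2 * (p.2.1 ^ 2 + p.2.2 ^ 2)

/-- The gradient of a function on `ℝ³ = ℝ × ℝ × ℝ`, computed coordinatewise. -/
noncomputable def grad3 (f : ℝ × ℝ × ℝ → ℝ) (p : ℝ × ℝ × ℝ) : ℝ × ℝ × ℝ :=
  (deriv (fun t => f (t, p.2.1, p.2.2)) p.1,
   deriv (fun t => f (p.1, t, p.2.2)) p.2.1,
   deriv (fun t => f (p.1, p.2.1, t)) p.2.2)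

/-- The cross product on `ℝ³ = ℝ × ℝ × ℝ`. -/
def cross3 (a b : ℝ × ℝ × ℝ) : ℝ × ℝ × ℝ :=
  (a.2.1 * b.2.2 - a.2.2 * b.2.1,
   a.2.2 * b.1 - a.1 * b.2.2,
   a.1 * b.2.1 - a.2.1 * b.1)

lemma grad_K (a l : ℝ) (p : ℝ × ℝ × ℝ) :
    grad3 (fun q => a * q.1 + l * q.1 ^ 2) p = (a + 2 * l * p.1, 0, 0) := by
  have h : HasDerivAt (fun t : ℝ => a * t + l * t ^ 2) (a + 2 * l * p.1) p.1 := by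
    have := ((hasDerivAt_id p.1).const_mul a).add (((hasDerivAt_id p.1).pow 2).const_mul l)
    refine this.congr_deriv ?_
    simp
    ring
  simp [grad3, h.deriv]

lemma grad_S_v (η : ℝ) (p : ℝ × ℝ × ℝ) : (grad3 (Sred η) p).2.1 = -4 * p.2.1 := by
  have h : HasDerivAt (fun t : ℝ => (η - p.1) ^ 2 * p.1 ^ 4 / 2 - 2 * (t ^ 2 + p.2.2 ^ 2))
      (-4 * p.2.1) p.2.1 := by
    have := ((((hasDerivAt_id p.2.1).pow 2).add_const (p.2.2 ^ 2)).const_mul 2).const_sub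
      ((η - p.1) ^ 2 * p.1 ^ 4 / 2)
    refine this.congr_deriv ?_
    simp
    ring
  exact h.deriv

lemma grad_S_w (η : ℝ) (p : ℝ × ℝ × ℝ) : (grad3 (Sred η) p).2.2 = -4 * p.2.2 := by
  have h : HasDerivAt (fun t : ℝ => (η - p.1) ^ 2 * p.1 ^ 4 / 2 - 2 * (p.2.1 ^ 2 + t ^ 2))
      (-4 * p.2.2) p.2.2 := by
    have := ((((hasDerivAt_id p.2.2).pow 2).const_add (p.2.1 ^ 2)).const_mul 2).const_sub
      ((η - p.1) ^ 2 * p.1 ^ 4 / 2)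
    refine this.congr_deriv ?_
    simp
    ring
  exact h.deriv

lemma cross_eq (η a l : ℝ) (p : ℝ × ℝ × ℝ) :
    cross3 (grad3 (fun q => a * q.1 + l * q.1 ^ 2) p) (grad3 (Sred η) p)
      = (0, 4 * (a + 2 * l * p.1) * p.2.2, -4 * (a + 2 * l * p.1) * p.2.1) := by
  rw [grad_K]
  simp only [cross3, grad_S_v, grad_S_w, Prod.mk.injEq]
  refine ⟨by ring, by ring, by ring⟩

lemma crit_iff (a l u : ℝ) (hl : l ≠ 0) : a + 2 * l * u = 0 ↔ u = -a / (2 * l) := by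
  rw [eq_div_iff (by simpa using hl)]
  constructor <;> intro h <;> linarith

lemma equilibrium_iff (η a l : ℝ) (hl : l ≠ 0) (p : ℝ × ℝ × ℝ) (hS : Sred η p = 0)
    (h0 : 0 < p.1) (h1 : p.1 < η) :
    cross3 (grad3 (fun q => a * q.1 + l * q.1 ^ 2) p) (grad3 (Sred η) p) = 0
      ↔ p.1 = -a / (2 * l) := by
  rw [cross_eq, ← crit_iff a l p.1 hl]
  constructor
  · intro h
    by_contra hne
    simp only [Prod.mk_eq_zero, mul_eq_zero, hne] at h
    norm_num at h
    obtain ⟨hw, hv⟩ := h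
    have hpos : 0 < (η - p.1) ^ 2 * p.1 ^ 4 := by
      have : 0 < η - p.1 := by linarith
      positivity
    simp only [Sred, hw, hv] at hS
    linarith
  · intro h
    simp [h]

/-- For the first-order reduced normal form `K = (2δ + αη)u + λu²`, a point of
`P^η` with `0 < u < η` is an equilibrium of `X_K = ∇K × ∇S^η` iff
`u = u₀ = −(2δ + αη)/(2λ)`; in particular, if `u₀ ∈ (0,η)` the circle
`{u = u₀}` on `P^η` consists of equilibria, and if `u₀ ∉ (0,η)` there are no
equilibria with `0 < u < η`. -/
theorem circle_of_equilibria (η δ α l : ℝ) (hη : 0 < η) (hl : l ≠ 0) :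
    (∀ p : ℝ × ℝ × ℝ, Sred η p = 0 → 0 < p.1 → p.1 < η →
      (cross3 (grad3 (fun q => (2 * δ + α * η) * q.1 + l * q.1 ^ 2) p)
          (grad3 (Sred η) p) = 0
        ↔ p.1 = -(2 * δ + α * η) / (2 * l))) ∧
    (-(2 * δ + α * η) / (2 * l) ∈ Set.Ioo 0 η →
      ∀ p : ℝ × ℝ × ℝ, Sred η p = 0 → 0 ≤ p.1 → p.1 ≤ η →
        p.1 = -(2 * δ + α * η) / (2 * l) →
        cross3 (grad3 (fun q => (2 * δ + α * η) * q.1 + l * q.1 ^ 2) p)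
          (grad3 (Sred η) p) = 0) ∧
    (-(2 * δ + α * η) / (2 * l) ∉ Set.Ioo 0 η →
      ∀ p : ℝ × ℝ × ℝ, Sred η p = 0 → 0 < p.1 → p.1 < η →
        cross3 (grad3 (fun q => (2 * δ + α * η) * q.1 + l * q.1 ^ 2) p)
          (grad3 (Sred η) p) ≠ 0) := by
  refine ⟨fun p hS h0 h1 => equilibrium_iff η _ l hl p hS h0 h1, ?_, ?_⟩
  · intro _ p _ _ _ hu
    rw [cross_eq, (crit_iff _ l p.1 hl).2 hu]
    simp
  · intro hu p hS h0 h1 h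
    have := (equilibrium_iff η _ l hl p hS h0 h1).1 h
    exact hu (this ▸ ⟨h0, h1⟩)
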